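/- arXiv:1304.6607 — 2 statements merged into one kernel-verified Lean document; each statement's English description precedes it below -/
import Mathlib

section
/- The toric ideal I_A contains no binomial of the form x_i^{a} − M where a is a positive integer and M is a monomial not divisible by x_i, and no binomial of the form y_j^{a} − M where a is a positive integer and M is a monomial not divisible by y_j. -/
open MvPolynomial

variable (K : Type*) [Field K]

/-- The binomial `f_{ij} = x_i^{d_i} y_j^{d_j} − x_j^{d_j} y_i^{d_i}` in
`S = K[x_1,…,x_m,y_1,…,y_m]`, where the variable `x_i` is `X (Sum.inl i)` and
`y_i` is `X (Sum.inr i)`. -/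
noncomputable def fIJ {m : ℕ} (d : Fin m → ℕ) (i j : Fin m) :
    MvPolynomial (Fin m ⊕ Fin m) K :=
  X (Sum.inl i) ^ d i * X (Sum.inr j) ^ d j - X (Sum.inl j) ^ d j * X (Sum.inr i) ^ d i

/-- The ideal `I_2(D)` generated by the `2`-minors `f_{ij}`, `i < j`. -/
noncomputable def I2D {m : ℕ} (d : Fin m → ℕ) : Ideal (MvPolynomial (Fin m ⊕ Fin m) K) :=
  Ideal.span {g | ∃ i j : Fin m, i < j ∧ g = fIJ K d i j}

/-- A binomial: a difference of two (monic) monomials. -/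
def IsBinom {K : Type*} [Field K] {σ : Type*} (f : MvPolynomial σ K) : Prop :=
  ∃ u v : σ →₀ ℕ, f = monomial u 1 - monomial v 1

/-- The `K`-algebra homomorphism `φ : S → K[t_1,…,t_{m+1}]` with
`φ(x_i) = t_1^{b_i} t_{i+1}` and `φ(y_i) = t_{i+1}`, where `b_i = ∏_{j ≠ i} d_j`.
(Here `t_1` is `X 0` and `t_{i+1}` is `X i.succ`.) -/
noncomputable def phiA {m : ℕ} (d : Fin m → ℕ) :
    MvPolynomial (Fin m ⊕ Fin m) K →ₐ[K] MvPolynomial (Fin (m + 1)) K :=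
  aeval (Sum.elim
    (fun i : Fin m => X 0 ^ (∏ j ∈ Finset.univ.erase i, d j) * X i.succ)
    (fun i : Fin m => X i.succ))

/-- The toric ideal `I_A` of the Lawrence lifting of `(b_1,…,b_m)`. -/
noncomputable def IA {m : ℕ} (d : Fin m → ℕ) : Ideal (MvPolynomial (Fin m ⊕ Fin m) K) :=
  RingHom.ker (phiA K d).toRingHom

/-!
A binomial `X^u - X^v` lies in a toric ideal exactly when `u` and `v` have the same degree. For a
Lawrence lifting, the identity block of the degree matrix says that `X^v` has the same total
exponent in `x_j, y_j` as `X^u`, for every `j`. If `X^u = x_i^p * y_i^q`, this forces `X^v` to be a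
monomial in `x_i` and `y_i` of total exponent `p + q`, and the upper block then fixes its exponent
in `x_i` as soon as the `i`-th weight is not torsion. Hence `X^v = X^u`: monomials in a single pair
`x_i, y_i` are alone in their fibre.
-/

section ToricIdeal

variable {σ M N : Type*}

section CommSemiring

variable (R : Type*) [CommSemiring R] [AddCommMonoid M] [AddCommMonoid N]

/-- The monomial map of a configuration `A : σ → M`, sending `X s` to the basis element of degree
`A s` of the monoid algebra of `M`. Its exponents live in an arbitrary commutative monoid `M`, so
that both polynomial rings and Laurent polynomial rings occur as targets. -/
noncomputable def toricHom (A : σ → M) : MvPolynomial σ R →ₐ[R] AddMonoidAlgebra R M :=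
  aeval fun s => AddMonoidAlgebra.single (A s) 1

/-- The toric ideal of a configuration `A : σ → M`: the kernel of its monomial map. -/
noncomputable def toricIdeal (A : σ → M) : Ideal (MvPolynomial σ R) :=
  RingHom.ker (toricHom R A)

variable {R}

theorem toricHom_monomial (A : σ → M) (u : σ →₀ ℕ) (r : R) :
    toricHom R A (monomial u r) = AddMonoidAlgebra.single (Finsupp.weight A u) r := by
  simp [toricHom, aeval_monomial, AddMonoidAlgebra.single_pow, AddMonoidAlgebra.single_mul_single,
    Finsupp.weight_apply, Finsupp.prod, Finsupp.sum]

theorem toricHom_comp (f : M →+ N) (A : σ → M) :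
    toricHom R (f ∘ A) = (AddMonoidAlgebra.mapDomainAlgHom R R f).comp (toricHom R A) := by
  ext s : 1
  simp [toricHom]

theorem toricIdeal_comp {f : M →+ N} (hf : Function.Injective f) (A : σ → M) :
    toricIdeal R (f ∘ A) = toricIdeal R A := by
  ext g
  have hmap : Function.Injective (AddMonoidAlgebra.mapDomainAlgHom R R f) :=
    AddMonoidAlgebra.mapDomain_injective hf
  simp only [toricIdeal, RingHom.mem_ker, toricHom_comp, AlgHom.comp_apply]
  exact map_eq_zero_iff _ hmap

end CommSemiring

theorem monomial_sub_monomial_mem_toricIdeal_iff {R : Type*} [CommRing R] [Nontrivial R]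
    [AddCommMonoid M] {A : σ → M} {u v : σ →₀ ℕ} :
    monomial u 1 - monomial v 1 ∈ toricIdeal R A ↔ Finsupp.weight A u = Finsupp.weight A v := by
  rw [toricIdeal, RingHom.mem_ker, map_sub, sub_eq_zero, toricHom_monomial, toricHom_monomial]
  exact AddMonoidAlgebra.single_left_inj one_ne_zero

end ToricIdeal

section LawrenceLifting

variable {σ M : Type*}

/-- The Lawrence lifting of a configuration `A : σ → M`: the columns of the block matrix
`(A 0; 1 1)`. The variables `x_i` and `y_i` are indexed by `Sum.inl i` and `Sum.inr i`. -/
noncomputable def lawrenceLifting [Zero M] (A : σ → M) : σ ⊕ σ → M × (σ →₀ ℕ) :=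
  Sum.elim (fun i => (A i, Finsupp.single i 1)) (fun i => (0, Finsupp.single i 1))

theorem weight_lawrenceLifting [AddCommMonoid M] (A : σ → M) (u v : σ →₀ ℕ) :
    Finsupp.weight (lawrenceLifting A) (u.sumElim v) = (Finsupp.weight A u, u + v) := by
  simp only [lawrenceLifting, Finsupp.weight_apply, Finsupp.sum_sumElim]
  ext : 1
  · simp [Finsupp.sum, Prod.fst_sum]
  · simpa [Finsupp.sum, Prod.snd_sum] using congrArg₂ (· + ·) u.sum_single v.sum_single

theorem weight_lawrenceLifting_eq_iff [AddCancelCommMonoid M] {A : σ → M} {i : σ}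
    (hA : ¬IsOfFinAddOrder (A i)) {p q : ℕ} {w : σ ⊕ σ →₀ ℕ} :
    Finsupp.weight (lawrenceLifting A)
        (Finsupp.single (Sum.inl i) p + Finsupp.single (Sum.inr i) q) =
      Finsupp.weight (lawrenceLifting A) w ↔
    w = Finsupp.single (Sum.inl i) p + Finsupp.single (Sum.inr i) q := by
  refine ⟨fun h => ?_, fun h => by rw [h]⟩
  obtain ⟨u, v, rfl⟩ : ∃ u v, w = Finsupp.sumElim u v :=
    ⟨_, _, (Finsupp.sumFinsuppEquivProdFinsupp.symm_apply_apply w).symm⟩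
  rw [← Finsupp.sumElim_single_single] at h ⊢
  simp only [weight_lawrenceLifting, Prod.mk.injEq, ← Finsupp.single_add] at h
  obtain ⟨hweight, hsum⟩ := h
  obtain ⟨n, rfl⟩ : ∃ n, u = Finsupp.single i n :=
    Finsupp.support_subset_singleton'.1 <|
      (Finsupp.support_mono (hsum ▸ le_self_add)).trans Finsupp.support_single_subset
  obtain rfl : p = n := by
    rw [Finsupp.weight_single, Finsupp.weight_single] at hweight
    exact injective_nsmul_iff_not_isOfFinAddOrder.2 hA hweight
  rw [Finsupp.single_add] at hsum
  rw [add_left_cancel hsum]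

theorem X_pow_mul_X_pow_sub_monomial_mem_toricIdeal_iff {R : Type*} [CommRing R] [Nontrivial R]
    [AddCancelCommMonoid M] {A : σ → M} {i : σ} (hA : ¬IsOfFinAddOrder (A i)) {p q : ℕ}
    {w : σ ⊕ σ →₀ ℕ} :
    X (Sum.inl i) ^ p * X (Sum.inr i) ^ q - monomial w 1 ∈ toricIdeal R (lawrenceLifting A) ↔
      w = Finsupp.single (Sum.inl i) p + Finsupp.single (Sum.inr i) q := by
  rw [X_pow_eq_monomial, X_pow_eq_monomial, monomial_mul, one_mul,
    monomial_sub_monomial_mem_toricIdeal_iff, weight_lawrenceLifting_eq_iff hA]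

end LawrenceLifting

/-- `Finsupp.cons` as an additive homomorphism. For `M = ℕ` it turns the degrees of the Lawrence
lifting of a single row into exponent vectors of monomials in `t_1, …, t_{m+1}`. -/
noncomputable def finsuppConsHom (m : ℕ) (M : Type*) [AddZeroClass M] :
    M × (Fin m →₀ M) →+ (Fin (m + 1) →₀ M) where
  toFun a := a.2.cons a.1
  map_zero' := Finsupp.cons_zero_zero
  map_add' a b := by
    ext j
    cases j using Fin.cases <;> simp

theorem finsuppConsHom_injective (m : ℕ) (M : Type*) [AddZeroClass M] :
    Function.Injective (finsuppConsHom m M) := fun _ _ h =>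
  Prod.ext_iff.2 (Finsupp.cons_injective2 h)

theorem monomial_cons_single {R : Type*} [CommSemiring R] {m : ℕ} (n k : ℕ) (i : Fin m) :
    monomial ((Finsupp.single i k).cons n) (1 : R) = X 0 ^ n * X i.succ ^ k := by
  have hcons : (Finsupp.single i k).cons n = Finsupp.single 0 n + Finsupp.single i.succ k := by
    ext j
    cases j using Fin.cases <;> simp [Finsupp.single_apply]
  rw [hcons, X_pow_eq_monomial, X_pow_eq_monomial, monomial_mul, one_mul]

theorem phiA_eq_toricHom {m : ℕ} (d : Fin m → ℕ) :
    phiA K d = toricHom K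
      (finsuppConsHom m ℕ ∘ lawrenceLifting fun i => ∏ j ∈ Finset.univ.erase i, d j) := by
  refine algHom_ext fun s => ?_
  rw [phiA, toricHom, aeval_X, aeval_X]
  rcases s with i | i
  · change X 0 ^ (∏ j ∈ Finset.univ.erase i, d j) * X i.succ =
      monomial ((Finsupp.single i 1).cons (∏ j ∈ Finset.univ.erase i, d j)) 1
    rw [monomial_cons_single, pow_one]
  · change X i.succ = monomial ((Finsupp.single i 1).cons 0) 1
    rw [monomial_cons_single, pow_zero, one_mul, pow_one]

theorem IA_eq_toricIdeal_lawrenceLifting {m : ℕ} (d : Fin m → ℕ) :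
    IA K d = toricIdeal K (lawrenceLifting fun i => ∏ j ∈ Finset.univ.erase i, d j) := by
  rw [← toricIdeal_comp (finsuppConsHom_injective m ℕ), IA, phiA_eq_toricHom]
  rfl

theorem stmt15_general {R σ M : Type*} [CommRing R] [Nontrivial R] [AddCancelCommMonoid M]
    {A : σ → M} (hA : ∀ i, ¬IsOfFinAddOrder (A i)) :
    (∀ (i : σ) (a : ℕ), 0 < a → ∀ w : (σ ⊕ σ) →₀ ℕ, w (Sum.inl i) = 0 →
      X (Sum.inl i) ^ a - monomial w (1 : R) ∉ toricIdeal R (lawrenceLifting A)) ∧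
    (∀ (j : σ) (a : ℕ), 0 < a → ∀ w : (σ ⊕ σ) →₀ ℕ, w (Sum.inr j) = 0 →
      X (Sum.inr j) ^ a - monomial w (1 : R) ∉ toricIdeal R (lawrenceLifting A)) := by
  refine ⟨fun i a ha w hw hmem => ha.ne' ?_, fun j a ha w hw hmem => ha.ne' ?_⟩
  · have hfibre : w = Finsupp.single (Sum.inl i) a + Finsupp.single (Sum.inr i) 0 :=
      (X_pow_mul_X_pow_sub_monomial_mem_toricIdeal_iff (hA i)).1 (by rwa [pow_zero, mul_one])
    simpa [hfibre] using hw
  · have hfibre : w = Finsupp.single (Sum.inl j) 0 + Finsupp.single (Sum.inr j) a :=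
      (X_pow_mul_X_pow_sub_monomial_mem_toricIdeal_iff (hA j)).1 (by rwa [pow_zero, one_mul])
    simpa [hfibre] using hw

theorem stmt15 (m : ℕ) (hm : 2 ≤ m) (d : Fin m → ℕ) (hd : ∀ i, 0 < d i) :
    (∀ (i : Fin m) (a : ℕ), 0 < a → ∀ w : (Fin m ⊕ Fin m) →₀ ℕ, w (Sum.inl i) = 0 →
      X (Sum.inl i) ^ a - monomial w (1 : K) ∉ IA K d) ∧
    (∀ (j : Fin m) (a : ℕ), 0 < a → ∀ w : (Fin m ⊕ Fin m) →₀ ℕ, w (Sum.inr j) = 0 →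
      X (Sum.inr j) ^ a - monomial w (1 : K) ∉ IA K d) := by
  rw [IA_eq_toricIdeal_lawrenceLifting]
  exact stmt15_general fun _ => not_isOfFinAddOrder_of_isAddTorsionFree
    (Finset.prod_pos fun j _ => hd j).ne'
end

section
/- The lattice basis ideal J_L equals the intersection I_2(D) ∩ (x_1^{d_1}, y_1^{d_1}). -/
open MvPolynomial

variable (K : Type*) [Field K]

/-- The lattice basis ideal `J_L`, generated by the binomials
`f_{1j} = x_1^{d_1} y_j^{d_j} − x_j^{d_j} y_1^{d_1}` for `2 ≤ j ≤ m`. -/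
noncomputable def JL {m : ℕ} (d : Fin (m + 2) → ℕ) :
    Ideal (MvPolynomial (Fin (m + 2) ⊕ Fin (m + 2)) K) :=
  Ideal.span {g | ∃ j : Fin (m + 2), j ≠ 0 ∧ g = fIJ K d 0 j}

/-! A `3 × 3` determinant whose third row is a combination of the two rows of `D` vanishes, so the
ideal `(x₁^d₁, y₁^d₁)` multiplies every minor of `D` into `J_L`. Hence, with `Q` the ideal of the
minors avoiding the first column, `I₂(D) = J_L + Q` and
`Q (x₁^d₁, y₁^d₁) ⊆ J_L ⊆ (x₁^d₁, y₁^d₁)`. By the modular law it remains to see that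
`Q ∩ (x₁^d₁, y₁^d₁) = Q (x₁^d₁, y₁^d₁)`. This holds because the generators of `Q` do not involve
`x₁, y₁`: multiplication by them preserves the span of the monomials outside `(x₁^d₁, y₁^d₁)`,
which is a complement of that ideal. -/

section TwoMinors

variable {A ι : Type*} [CommRing A]

/-- The `2`-minor on columns `i, j` of the matrix with the two rows `u` and `v`. -/
def twoMinor (u v : ι → A) (i j : ι) : A :=
  u i * v j - u j * v i

/-- The ideal generated by the `2`-minors of the matrix with rows `u` and `v` whose columns lie
in `s`. Both orders of the columns and repeated columns are allowed, so that `ι` needs no order;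
this adds only signs and zeros to the generators. -/
def twoMinorsIdeal (u v : ι → A) (s : Set ι) : Ideal A :=
  Ideal.span (Set.image2 (twoMinor u v) s s)

/-- The ideal generated by the `2`-minors of the matrix with rows `u` and `v` that involve the
column `i₀`: the analogue of the lattice basis ideal `J_L` for an arbitrary matrix. -/
def pivotMinorsIdeal (u v : ι → A) (i₀ : ι) : Ideal A :=
  Ideal.span (Set.range (twoMinor u v i₀))

variable (u v : ι → A) (i₀ i j : ι)

lemma twoMinor_self : twoMinor u v i i = 0 :=
  sub_self _

lemma neg_twoMinor : -twoMinor u v i j = twoMinor u v j i :=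
  neg_sub _ _

lemma twoMinor_mem_pivotMinorsIdeal : twoMinor u v i₀ j ∈ pivotMinorsIdeal u v i₀ :=
  Ideal.subset_span ⟨j, rfl⟩

lemma twoMinorsIdeal_univ_eq_sup :
    twoMinorsIdeal u v Set.univ = pivotMinorsIdeal u v i₀ ⊔ twoMinorsIdeal u v {i₀}ᶜ := by
  apply le_antisymm
  · refine Ideal.span_le.2 (Set.image2_subset_iff.2 fun i _ j _ ↦ ?_)
    by_cases hi : i = i₀
    · exact hi ▸ Ideal.mem_sup_left (twoMinor_mem_pivotMinorsIdeal u v i j)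
    by_cases hj : j = i₀
    · rw [← neg_twoMinor]
      exact hj ▸ Ideal.mem_sup_left (neg_mem (twoMinor_mem_pivotMinorsIdeal u v j i))
    · exact Ideal.mem_sup_right (Ideal.subset_span ⟨i, hi, j, hj, rfl⟩)
  · refine sup_le (Ideal.span_mono ?_)
      (Ideal.span_mono (Set.image2_subset (Set.subset_univ _) (Set.subset_univ _)))
    rintro _ ⟨j, rfl⟩
    exact ⟨i₀, trivial, j, trivial, rfl⟩

lemma pivotMinorsIdeal_le_span_pair : pivotMinorsIdeal u v i₀ ≤ Ideal.span {u i₀, v i₀} := by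
  refine Ideal.span_le.2 (Set.range_subset_iff.2 fun j ↦ Ideal.mem_span_pair.2 ⟨v j, -u j, ?_⟩)
  rw [twoMinor]
  ring

-- Laplace expansion of the vanishing determinant with rows `u`, `v`, `a * u + b * v` on the columns
-- `i, j, i₀`.
lemma twoMinor_mul_add_mul (a b : A) :
    twoMinor u v i j * (a * u i₀ + b * v i₀) =
      (a * u i + b * v i) * twoMinor u v i₀ j - (a * u j + b * v j) * twoMinor u v i₀ i := by
  simp only [twoMinor]
  ring

lemma twoMinorsIdeal_mul_span_pair_le (s : Set ι) :
    twoMinorsIdeal u v s * Ideal.span {u i₀, v i₀} ≤ pivotMinorsIdeal u v i₀ := by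
  rw [twoMinorsIdeal, Ideal.span_mul_span', Ideal.span_le]
  rintro _ ⟨_, ⟨i, -, j, -, rfl⟩, p, hp, rfl⟩
  obtain ⟨a, b, rfl⟩ := Ideal.mem_span_pair.1 (Ideal.subset_span hp)
  change twoMinor u v i j * (a * u i₀ + b * v i₀) ∈ pivotMinorsIdeal u v i₀
  rw [twoMinor_mul_add_mul]
  exact sub_mem (Ideal.mul_mem_left _ _ (twoMinor_mem_pivotMinorsIdeal u v i₀ j))
    (Ideal.mul_mem_left _ _ (twoMinor_mem_pivotMinorsIdeal u v i₀ i))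

variable {u v i₀}

lemma pivotMinorsIdeal_eq_inf_of_inf_eq_mul
    (h : twoMinorsIdeal u v {i₀}ᶜ ⊓ Ideal.span {u i₀, v i₀} =
      twoMinorsIdeal u v {i₀}ᶜ * Ideal.span {u i₀, v i₀}) :
    pivotMinorsIdeal u v i₀ = twoMinorsIdeal u v Set.univ ⊓ Ideal.span {u i₀, v i₀} := by
  rw [twoMinorsIdeal_univ_eq_sup u v i₀,
    sup_inf_assoc_of_le _ (pivotMinorsIdeal_le_span_pair u v i₀), h,
    sup_eq_left.2 (twoMinorsIdeal_mul_span_pair_le u v i₀ _)]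

end TwoMinors

lemma span_inf_eq_span_mul_of_isCompl {R A : Type*} [CommSemiring R] [CommRing A] [Algebra R A]
    {F : Set A} {J : Ideal A} {N : Submodule R A} (hN : IsCompl N (J.restrictScalars R))
    (hF : ∀ n ∈ N, ∀ f ∈ F, n * f ∈ N) :
    Ideal.span F ⊓ J = Ideal.span F * J := by
  refine le_antisymm (fun p ⟨hpF, hpJ⟩ ↦ ?_) Ideal.mul_le_inf
  have span_le : (Ideal.span F).restrictScalars R ≤ N ⊔ (Ideal.span F * J).restrictScalars R := by
    intro q hq
    induction hq using Submodule.closure_induction with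
    | zero => exact zero_mem _
    | add _ _ _ _ hp hq => exact add_mem hp hq
    | smul_mem a f hf =>
      obtain ⟨n, b, hn, hb, rfl⟩ := Submodule.codisjoint_iff_exists_add_eq.1 hN.codisjoint a
      have hbf : f * b ∈ Ideal.span F * J := Ideal.mul_mem_mul (Ideal.subset_span hf) hb
      rw [smul_eq_mul, add_mul, mul_comm b]
      exact Submodule.add_mem_sup (hF n hn f hf) hbf
  obtain ⟨n, hn, q, hq, rfl⟩ := Submodule.mem_sup.1 (span_le hpF)
  have hqJ : q ∈ J := (Ideal.mul_le_inf hq).2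
  have hnJ : n ∈ J := (add_mem_cancel_right hqJ).1 hpJ
  rwa [Submodule.disjoint_def.1 hN.disjoint n hn hnJ, zero_add]

section Monomials

variable {R σ : Type*} [CommSemiring R]

lemma isCompl_restrictSupport {s t : Set (σ →₀ ℕ)} (h : IsCompl s t) :
    IsCompl (restrictSupport R s) (restrictSupport R t) :=
  (Submodule.orderIsoMapComap (AddMonoidAlgebra.coeffLinearEquiv R)).symm.isCompl
    ⟨Finsupp.disjoint_supported_supported h.disjoint,
      Finsupp.codisjoint_supported_supported h.codisjoint⟩

lemma restrictScalars_span_monomial (T : Set (σ →₀ ℕ)) :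
    (Ideal.span ((monomial · (1 : R)) '' T)).restrictScalars R =
      restrictSupport R (upperClosure T : Set (σ →₀ ℕ)) := by
  ext p
  exact mem_ideal_span_monomial_image

lemma mem_restrictSupport_of_mem_supported {τ : Set σ} {f : MvPolynomial σ R}
    (hf : f ∈ supported R τ) : f ∈ restrictSupport R {m : σ →₀ ℕ | ↑m.support ⊆ τ} :=
  fun m hm i hi ↦ mem_supported.1 hf ((mem_vars_iff_mem_support i).2 ⟨m, hm, hi⟩)

open scoped Pointwise in
lemma compl_upperClosure_add_subset {T : Set (σ →₀ ℕ)} {τ : Set σ}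
    (hT : ∀ t ∈ T, Disjoint (t.support : Set σ) τ) :
    (upperClosure T : Set (σ →₀ ℕ))ᶜ + {m : σ →₀ ℕ | ↑m.support ⊆ τ} ⊆
      (upperClosure T : Set (σ →₀ ℕ))ᶜ := by
  rintro _ ⟨k, hk, m, hm, rfl⟩ ⟨t, ht, hle⟩
  refine hk ⟨t, ht, fun i ↦ ?_⟩
  by_cases hi : i ∈ t.support
  · have hmi : m i = 0 :=
      Finsupp.notMem_support_iff.1 fun him ↦ Set.disjoint_left.1 (hT t ht) hi (hm him)
    simpa [hmi] using hle i
  · simp [Finsupp.notMem_support_iff.1 hi]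

lemma mul_mem_restrictSupport_compl_upperClosure {T : Set (σ →₀ ℕ)} {τ : Set σ}
    (hT : ∀ t ∈ T, Disjoint (t.support : Set σ) τ) {n f : MvPolynomial σ R}
    (hn : n ∈ restrictSupport R (upperClosure T : Set (σ →₀ ℕ))ᶜ) (hf : f ∈ supported R τ) :
    n * f ∈ restrictSupport R (upperClosure T : Set (σ →₀ ℕ))ᶜ := by
  refine restrictSupport_mono R (compl_upperClosure_add_subset hT) ?_
  rw [restrictSupport_add]
  exact Submodule.mul_mem_mul hn (mem_restrictSupport_of_mem_supported hf)

lemma X_pow_mem_supported {τ : Set σ} {i : σ} (hi : i ∈ τ) (n : ℕ) :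
    (X i ^ n : MvPolynomial σ R) ∈ supported R τ :=
  pow_mem (Algebra.subset_adjoin (Set.mem_image_of_mem X hi)) n

end Monomials

section DisjointVariables

variable {R σ : Type*} [CommRing R]

theorem span_inf_span_monomial_eq_mul {F : Set (MvPolynomial σ R)} {T : Set (σ →₀ ℕ)} {τ : Set σ}
    (hF : F ⊆ supported R τ) (hT : ∀ t ∈ T, Disjoint (t.support : Set σ) τ) :
    Ideal.span F ⊓ Ideal.span ((monomial · (1 : R)) '' T) =
      Ideal.span F * Ideal.span ((monomial · (1 : R)) '' T) := by
  refine span_inf_eq_span_mul_of_isCompl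
    (N := restrictSupport R (upperClosure T : Set (σ →₀ ℕ))ᶜ) ?_
    fun n hn f hf ↦ mul_mem_restrictSupport_compl_upperClosure hT hn (hF hf)
  rw [restrictScalars_span_monomial]
  exact isCompl_restrictSupport isCompl_compl.symm

theorem stmt16_general {ι : Type*} {u v : ι → MvPolynomial σ R} {i₀ : ι} {a b : σ →₀ ℕ}
    (hu₀ : u i₀ = monomial a 1) (hv₀ : v i₀ = monomial b 1)
    (hu : ∀ i ≠ i₀, u i ∈ supported R (a.support ∪ b.support : Set σ)ᶜ)
    (hv : ∀ i ≠ i₀, v i ∈ supported R (a.support ∪ b.support : Set σ)ᶜ) :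
    pivotMinorsIdeal u v i₀ = twoMinorsIdeal u v Set.univ ⊓ Ideal.span {u i₀, v i₀} := by
  apply pivotMinorsIdeal_eq_inf_of_inf_eq_mul
  have span_pair : ({u i₀, v i₀} : Set (MvPolynomial σ R)) = (monomial · 1) '' {a, b} := by
    rw [hu₀, hv₀, Set.image_pair]
  rw [span_pair]
  refine span_inf_span_monomial_eq_mul (τ := (a.support ∪ b.support : Set σ)ᶜ) ?_ ?_
  · rintro _ ⟨i, hi, j, hj, rfl⟩
    exact sub_mem (mul_mem (hu i hi) (hv j hj)) (mul_mem (hu j hj) (hv i hi))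
  · rintro t (rfl | rfl)
    · exact Set.disjoint_compl_right_iff_subset.2 Set.subset_union_left
    · exact Set.disjoint_compl_right_iff_subset.2 Set.subset_union_right

end DisjointVariables

lemma I2D_eq_twoMinorsIdeal {m : ℕ} (d : Fin m → ℕ) :
    I2D K d = twoMinorsIdeal (fun i ↦ X (Sum.inl i) ^ d i) (fun i ↦ X (Sum.inr i) ^ d i)
      Set.univ := by
  apply le_antisymm
  · refine Ideal.span_mono ?_
    rintro _ ⟨i, j, -, rfl⟩
    exact ⟨i, trivial, j, trivial, rfl⟩
  · refine Ideal.span_le.2 (Set.image2_subset_iff.2 fun i _ j _ ↦ ?_)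
    rcases lt_trichotomy i j with hij | rfl | hji
    · exact Ideal.subset_span ⟨i, j, hij, rfl⟩
    · rw [twoMinor_self]
      exact zero_mem _
    · rw [← neg_twoMinor]
      exact neg_mem (Ideal.subset_span ⟨j, i, hji, rfl⟩)

lemma JL_eq_pivotMinorsIdeal {m : ℕ} (d : Fin (m + 2) → ℕ) :
    JL K d = pivotMinorsIdeal (fun i ↦ X (Sum.inl i) ^ d i) (fun i ↦ X (Sum.inr i) ^ d i) 0 := by
  apply le_antisymm
  · refine Ideal.span_mono ?_
    rintro _ ⟨j, -, rfl⟩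
    exact ⟨j, rfl⟩
  · refine Ideal.span_le.2 (Set.range_subset_iff.2 fun j ↦ ?_)
    by_cases hj : j = 0
    · rw [hj, twoMinor_self]
      exact zero_mem _
    · exact Ideal.subset_span ⟨j, hj, rfl⟩

theorem stmt16 (m : ℕ) (d : Fin (m + 2) → ℕ) (hd : ∀ i, 0 < d i) :
    JL K d = I2D K d ⊓
      Ideal.span {X (Sum.inl (0 : Fin (m + 2))) ^ d 0,
        X (Sum.inr (0 : Fin (m + 2))) ^ d 0} := by
  rw [JL_eq_pivotMinorsIdeal, I2D_eq_twoMinorsIdeal]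
  exact stmt16_general X_pow_eq_monomial X_pow_eq_monomial
    (fun i hi ↦ X_pow_mem_supported (by simp [hi.symm]) _)
    (fun i hi ↦ X_pow_mem_supported (by simp [hi.symm]) _)
end
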